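/- Let K be an algebraically closed field of characteristic 0 or at least 11, and let f ∈ K[X,Z] be a squarefree binary octic with Shioda invariants J₂,…,J₁₀. Then J₂(f) = J₃(f) = J₄(f) = J₅(f) = J₆(f) = J₈(f) = J₉(f) = J₁₀(f) = 0 if and only if f is GL₂(K)-equivalent to X⁷Z − Z⁸ (the homogenization of x⁷ − 1), and in that case J₇(f) ≠ 0; equivalently, the genus-3 hyperelliptic curve y² = f(x,1) has automorphism group C₁₄ if and only if these relations hold, and such a curve is K-isomorphic to y² = x⁷ − 1. -/

import Mathlib

open MvPolynomial

/-- Iterated partial derivative in the variable `x` (the variable `0`). -/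
noncomputable def dX {k : Type*} [CommSemiring k] (n : ℕ) (p : MvPolynomial (Fin 2) k) :
    MvPolynomial (Fin 2) k :=
  (fun q => pderiv (0 : Fin 2) q)^[n] p

/-- Iterated partial derivative in the variable `z` (the variable `1`). -/
noncomputable def dZ {k : Type*} [CommSemiring k] (n : ℕ) (p : MvPolynomial (Fin 2) k) :
    MvPolynomial (Fin 2) k :=
  (fun q => pderiv (1 : Fin 2) q)^[n] p

/-- The `h`-th transvectant of two binary forms of degrees `r₁` and `r₂`. -/
noncomputable def transvectant {k : Type*} [Field k] (r₁ r₂ h : ℕ)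
    (f g : MvPolynomial (Fin 2) k) : MvPolynomial (Fin 2) k :=
  C ((((r₁ - h).factorial * (r₂ - h).factorial : ℕ) : k) /
      (((r₁.factorial * r₂.factorial : ℕ)) : k)) *
    ∑ j ∈ Finset.range (h + 1),
      C ((-1 : k) ^ j * (h.choose j : k)) * (dX (h - j) (dZ j f) * dX j (dZ (h - j) g))

section Shioda

variable {k : Type*} [Field k]

/-- The covariant `𝔤 = (f,f)₄` of a binary octic. -/
noncomputable def covG (f : MvPolynomial (Fin 2) k) := transvectant 8 8 4 f f

/-- The covariant `𝔨 = (f,f)₆` of a binary octic. -/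
noncomputable def covK (f : MvPolynomial (Fin 2) k) := transvectant 8 8 6 f f

/-- The covariant `𝔥 = (𝔨,𝔨)₂` of a binary octic. -/
noncomputable def covH (f : MvPolynomial (Fin 2) k) := transvectant 4 4 2 (covK f) (covK f)

/-- The covariant `𝔪 = (f,𝔨)₄` of a binary octic. -/
noncomputable def covM (f : MvPolynomial (Fin 2) k) := transvectant 8 4 4 f (covK f)

/-- The covariant `𝔫 = (f,𝔥)₄` of a binary octic. -/
noncomputable def covN (f : MvPolynomial (Fin 2) k) := transvectant 8 4 4 f (covH f)

/-- The covariant `𝔭 = (𝔤,𝔨)₄` of a binary octic. -/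
noncomputable def covP (f : MvPolynomial (Fin 2) k) := transvectant 8 4 4 (covG f) (covK f)

/-- The covariant `𝔮 = (𝔤,𝔥)₄` of a binary octic. -/
noncomputable def covQ (f : MvPolynomial (Fin 2) k) := transvectant 8 4 4 (covG f) (covH f)

/-- The Shioda invariant `J₂ = (f,f)₈`. -/
noncomputable def shJ2 (f : MvPolynomial (Fin 2) k) : k :=
  constantCoeff (transvectant 8 8 8 f f)

/-- The Shioda invariant `J₃ = (f,𝔤)₈`. -/
noncomputable def shJ3 (f : MvPolynomial (Fin 2) k) : k :=
  constantCoeff (transvectant 8 8 8 f (covG f))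

/-- The Shioda invariant `J₄ = (𝔨,𝔨)₄`. -/
noncomputable def shJ4 (f : MvPolynomial (Fin 2) k) : k :=
  constantCoeff (transvectant 4 4 4 (covK f) (covK f))

/-- The Shioda invariant `J₅ = (𝔪,𝔨)₄`. -/
noncomputable def shJ5 (f : MvPolynomial (Fin 2) k) : k :=
  constantCoeff (transvectant 4 4 4 (covM f) (covK f))

/-- The Shioda invariant `J₆ = (𝔨,𝔥)₄`. -/
noncomputable def shJ6 (f : MvPolynomial (Fin 2) k) : k :=
  constantCoeff (transvectant 4 4 4 (covK f) (covH f))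

/-- The Shioda invariant `J₇ = (𝔪,𝔥)₄`. -/
noncomputable def shJ7 (f : MvPolynomial (Fin 2) k) : k :=
  constantCoeff (transvectant 4 4 4 (covM f) (covH f))

/-- The Shioda invariant `J₈ = (𝔭,𝔥)₄`. -/
noncomputable def shJ8 (f : MvPolynomial (Fin 2) k) : k :=
  constantCoeff (transvectant 4 4 4 (covP f) (covH f))

/-- The Shioda invariant `J₉ = (𝔫,𝔥)₄`. -/
noncomputable def shJ9 (f : MvPolynomial (Fin 2) k) : k :=
  constantCoeff (transvectant 4 4 4 (covN f) (covH f))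

/-- The Shioda invariant `J₁₀ = (𝔮,𝔥)₄`. -/
noncomputable def shJ10 (f : MvPolynomial (Fin 2) k) : k :=
  constantCoeff (transvectant 4 4 4 (covQ f) (covH f))

end Shioda

/-!
The invariants `J₄` and `J₆` of an octic `f` are the two basic invariants of the quartic
`𝔨 = (f, f)₆`. When both vanish, `𝔨` has a root of multiplicity at least three, so after a linear
substitution `𝔨 = 4cX³Z` with `c ≠ 0`, or `𝔨 = cX⁴`, where `c = 0` is allowed.

In the first case `𝔥 = -2c²X⁴`, so that `J₇` and `J₉` are nonzero multiples of the coefficients of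
`XZ⁷` and `Z⁸`. As `J₉ = 0`, squarefreeness of `f` is what makes `J₇` nonzero. The remaining
relations then annihilate every coefficient of `f` except those of `X⁸` and `XZ⁷`, and rescaling
leads to `X⁷Z - Z⁸`.

In the second case `𝔥 = 0`, hence `J₇ = 0`. Normalizing the coefficients of `Z⁸` and `X²Z⁶` to zero,
the vanishing of `J₂` and the shape of `𝔨` leave the one-parameter family
`8a₇X(sX - Z)⁶(6sX + Z)`, which is not squarefree.

Conversely, for a primitive seventh root of unity `ζ` the substitution `X ↦ ζX` fixes `X⁷Z - Z⁸` and
multiplies `J_d` by `ζ^{4d}`, so only `J₇` can survive.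
-/

namespace BinaryForm

section Casts

variable {R : Type*} [CommSemiring R]

theorem natCast_factorial_ne_zero_of_lt_ringChar [NoZeroDivisors R] [Nontrivial R] {n : ℕ}
    (hchar : ringChar R = 0 ∨ n < ringChar R) : (n.factorial : R) ≠ 0 := by
  rw [Ne, ringChar.spec]
  obtain hp | hp := CharP.char_is_prime_or_zero R (ringChar R)
  · rw [hp.dvd_factorial, not_le]
    exact hchar.resolve_left hp.ne_zero
  · rw [hp, zero_dvd_iff]
    exact n.factorial_ne_zero

theorem natCast_factorial_ne_zero_of_le {m n : ℕ} (hn : (n.factorial : R) ≠ 0) (hmn : m ≤ n) :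
    (m.factorial : R) ≠ 0 :=
  ne_zero_of_dvd_ne_zero hn (Nat.cast_dvd_cast (Nat.factorial_dvd_factorial hmn))

theorem ofNat_ne_zero_of_dvd {n : ℕ} (hn : (n : R) ≠ 0) {m : ℕ} [m.AtLeastTwo] (hmn : m ∣ n) :
    (ofNat(m) : R) ≠ 0 := by
  rw [← Nat.cast_ofNat]
  exact ne_zero_of_dvd_ne_zero hn (Nat.cast_dvd_cast hmn)

theorem C_ofNat {σ : Type*} (n : ℕ) [n.AtLeastTwo] :
    (C (ofNat(n) : R) : MvPolynomial σ R) = ofNat(n) :=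
  map_ofNat C n

theorem pderiv_ofNat {σ : Type*} (i : σ) (n : ℕ) [n.AtLeastTwo] :
    pderiv i (ofNat(n) : MvPolynomial σ R) = 0 :=
  (pderiv i).map_natCast n

end Casts

section CommRing

variable {R : Type*} [CommRing R]

/-- The binary form `∑ i, (n.choose i) * a i * X ^ (n - i) * Z ^ i`, encoded by Pascal's recursion
on the degree. Only `a 0, …, a n` matter. -/
noncomputable def binomForm : ℕ → (ℕ → R) → MvPolynomial (Fin 2) R
  | 0, a => C (a 0)
  | n + 1, a => X 0 * binomForm n a + X 1 * binomForm n fun i => a (i + 1)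

theorem binomForm_congr {n : ℕ} {a b : ℕ → R} (h : ∀ i ≤ n, a i = b i) :
    binomForm n a = binomForm n b := by
  induction n generalizing a b with
  | zero => rw [binomForm, binomForm, h 0 le_rfl]
  | succ n ih =>
    rw [binomForm, binomForm, ih fun i hi => h i (by lia),
      ih fun i hi => h (i + 1) (Nat.succ_le_succ hi)]

theorem binomForm_add (n : ℕ) (a b : ℕ → R) :
    binomForm n (fun i => a i + b i) = binomForm n a + binomForm n b := by
  induction n generalizing a b with
  | zero => simp [binomForm]
  | succ n ih => simp only [binomForm, ih]; ring

theorem binomForm_const_mul (n : ℕ) (c : R) (a : ℕ → R) :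
    binomForm n (fun i => c * a i) = C c * binomForm n a := by
  induction n generalizing a with
  | zero => simp [binomForm]
  | succ n ih => simp only [binomForm, ih]; ring

theorem X_zero_pow_dvd_binomForm {n m : ℕ} {a : ℕ → R} (h : ∀ i ≤ n, n < i + m → a i = 0) :
    X 0 ^ m ∣ binomForm n a := by
  induction n generalizing m a with
  | zero =>
    obtain _ | m := m
    · exact one_dvd _
    · rw [binomForm, h 0 le_rfl (by lia), map_zero]
      exact dvd_zero _
  | succ n ih =>
    refine dvd_add ?_ ((ih fun i hi hm => h (i + 1) (by lia) (by lia)).mul_left _)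
    obtain _ | m := m
    · exact one_dvd _
    · rw [pow_succ']
      exact mul_dvd_mul_left _ (ih fun i hi hm => h i (by lia) (by lia))

theorem not_squarefree_of_sq_dvd [Nontrivial R] {σ : Type*} {L f : MvPolynomial σ R}
    (hL : constantCoeff L = 0) (h : L ^ 2 ∣ f) : ¬Squarefree f := by
  intro hf
  have hunit := (hf L (sq L ▸ h)).map constantCoeff
  exact hunit.ne_zero hL

theorem apply_ne_zero_of_squarefree_binomForm [Nontrivial R] {n : ℕ} {a : ℕ → R}
    (hsf : Squarefree (binomForm (n + 1) a)) (ha : a (n + 1) = 0) : a n ≠ 0 := by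
  intro ha'
  refine not_squarefree_of_sq_dvd (L := X 0) (by simp) ?_ hsf
  refine X_zero_pow_dvd_binomForm fun i hi hni => ?_
  obtain rfl | rfl : i = n + 1 ∨ i = n := by lia
  exacts [ha, ha']

theorem isHomogeneous_binomForm (n : ℕ) (a : ℕ → R) : (binomForm n a).IsHomogeneous n := by
  induction n generalizing a with
  | zero => exact isHomogeneous_C _ _
  | succ n ih =>
    rw [binomForm, add_comm n 1]
    exact ((isHomogeneous_X _ _).mul (ih _)).add ((isHomogeneous_X _ _).mul (ih _))

theorem eval_zero_one_binomForm (n : ℕ) (a : ℕ → R) : eval ![0, 1] (binomForm n a) = a n := by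
  induction n generalizing a with
  | zero => simp [binomForm]
  | succ n ih => simp [binomForm, ih]

theorem pderiv_zero_binomForm (n : ℕ) (a : ℕ → R) :
    pderiv 0 (binomForm (n + 1) a) = C ((n + 1 : ℕ) : R) * binomForm n a := by
  induction n generalizing a with
  | zero => simp [binomForm, Derivation.leibniz]
  | succ n ih =>
    rw [binomForm]
    simp only [map_add, Derivation.leibniz, ih, smul_eq_mul, pderiv_X_self,
      pderiv_X_of_ne one_ne_zero]
    simp only [binomForm, Nat.cast_add, Nat.cast_one, map_add, map_one, map_natCast]
    ring

theorem pderiv_one_binomForm (n : ℕ) (a : ℕ → R) :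
    pderiv 1 (binomForm (n + 1) a) = C ((n + 1 : ℕ) : R) * binomForm n fun i => a (i + 1) := by
  induction n generalizing a with
  | zero => simp [binomForm, Derivation.leibniz]
  | succ n ih =>
    rw [binomForm]
    simp only [map_add, Derivation.leibniz, ih, smul_eq_mul, pderiv_X_self,
      pderiv_X_of_ne zero_ne_one]
    simp only [binomForm, Nat.cast_add, Nat.cast_one, map_add, map_one, map_natCast]
    ring

theorem pderiv_comm {σ : Type*} (i j : σ) (f : MvPolynomial σ R) :
    pderiv i (pderiv j f) = pderiv j (pderiv i f) := by
  classical
  have h : ⁅(pderiv i : Derivation R (MvPolynomial σ R) (MvPolynomial σ R)),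
      (pderiv j : Derivation R (MvPolynomial σ R) (MvPolynomial σ R))⁆ = 0 := by
    refine derivation_ext fun l => ?_
    simp [Derivation.commutator_apply, pderiv_X, Pi.single_apply, apply_ite]
  exact sub_eq_zero.mp (by
    simpa only [Derivation.commutator_apply, Derivation.zero_apply] using DFunLike.congr_fun h f)

theorem dX_pderiv_zero (m : ℕ) (p : MvPolynomial (Fin 2) R) :
    dX m (pderiv 0 p) = dX (m + 1) p :=
  (Function.iterate_succ_apply _ m p).symm

theorem dZ_pderiv_one (m : ℕ) (p : MvPolynomial (Fin 2) R) :
    dZ m (pderiv 1 p) = dZ (m + 1) p :=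
  (Function.iterate_succ_apply _ m p).symm

theorem pderiv_zero_dX (m : ℕ) (p : MvPolynomial (Fin 2) R) :
    pderiv 0 (dX m p) = dX (m + 1) p :=
  (Function.iterate_succ_apply' _ m p).symm

theorem pderiv_one_dZ (m : ℕ) (p : MvPolynomial (Fin 2) R) :
    pderiv 1 (dZ m p) = dZ (m + 1) p :=
  (Function.iterate_succ_apply' _ m p).symm

theorem dZ_pderiv_zero (m : ℕ) (p : MvPolynomial (Fin 2) R) :
    dZ m (pderiv 0 p) = pderiv 0 (dZ m p) :=
  Function.Commute.iterate_left (pderiv_comm 1 0) m p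

theorem dX_C_mul (m : ℕ) (c : R) (p : MvPolynomial (Fin 2) R) :
    dX m (C c * p) = C c * dX m p :=
  Function.Commute.iterate_left (g := (C c * ·)) (fun _ => pderiv_C_mul) m p

theorem dX_binomForm (m n : ℕ) (a : ℕ → R) :
    dX m (binomForm (n + m) a) = C ((n + m).descFactorial m : R) * binomForm n a := by
  induction m generalizing n with
  | zero => simp [dX]
  | succ m ih =>
    rw [← pderiv_zero_dX, ← add_assoc, add_right_comm, ih, pderiv_C_mul, pderiv_zero_binomForm,
      ← mul_assoc, ← map_mul, ← Nat.cast_mul, Nat.descFactorial_succ, mul_comm (_ - _),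
      Nat.add_sub_cancel]

theorem dZ_binomForm (m n : ℕ) (a : ℕ → R) :
    dZ m (binomForm (n + m) a) =
      C ((n + m).descFactorial m : R) * binomForm n fun i => a (i + m) := by
  induction m generalizing n with
  | zero => simp [dZ]
  | succ m ih =>
    rw [← pderiv_one_dZ, ← add_assoc, add_right_comm, ih, pderiv_C_mul, pderiv_one_binomForm,
      ← mul_assoc, ← map_mul, ← Nat.cast_mul, Nat.descFactorial_succ, mul_comm (_ - _),
      Nat.add_sub_cancel]
    simp only [add_assoc, add_comm 1 m]

theorem dX_dZ_binomForm {r m n : ℕ} (h : m + n ≤ r) (a : ℕ → R) :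
    dX m (dZ n (binomForm r a)) =
      C (r.descFactorial (m + n) : R) * binomForm (r - (m + n)) fun i => a (i + n) := by
  obtain ⟨s, rfl⟩ := Nat.exists_eq_add_of_le' h
  have hdesc := Nat.descFactorial_mul_descFactorial (n := s + m + n) (Nat.le_add_left n m)
  rw [Nat.add_sub_cancel, Nat.add_sub_cancel] at hdesc
  rw [Nat.add_sub_cancel, ← add_assoc, dZ_binomForm, dX_C_mul, dX_binomForm, ← mul_assoc,
    ← map_mul, ← Nat.cast_mul, ← hdesc, mul_comm (Nat.descFactorial _ _)]

end CommRing

section IsDomain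

variable {R : Type*} [CommRing R] [IsDomain R]

theorem binomForm_eq_binomForm_iff {n : ℕ} (hn : (n.factorial : R) ≠ 0) {a b : ℕ → R} :
    binomForm n a = binomForm n b ↔ ∀ i ≤ n, a i = b i := by
  refine ⟨fun h => ?_, binomForm_congr⟩
  induction n generalizing a b with
  | zero => simpa [binomForm] using h
  | succ n ih =>
    rw [Nat.factorial_succ, Nat.cast_mul] at hn
    have hC : C ((n + 1 : ℕ) : R) ≠ (0 : MvPolynomial (Fin 2) R) :=
      C_ne_zero.mpr (left_ne_zero_of_mul hn)
    have hX := congrArg (pderiv 0) h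
    have hZ := congrArg (pderiv 1) h
    rw [pderiv_zero_binomForm, pderiv_zero_binomForm] at hX
    rw [pderiv_one_binomForm, pderiv_one_binomForm] at hZ
    rintro (_ | i) hi
    · exact ih (right_ne_zero_of_mul hn) (mul_left_cancel₀ hC hX) 0 n.zero_le
    · exact ih (right_ne_zero_of_mul hn) (mul_left_cancel₀ hC hZ) i (Nat.le_of_succ_le_succ hi)

theorem eq_of_pderiv_one_binomForm_eq {n : ℕ} (hn : (n.factorial : R) ≠ 0) {a b : ℕ → R}
    (h : pderiv 1 (binomForm n a) = pderiv 0 (binomForm n b)) {i : ℕ} (hi : i < n) :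
    a (i + 1) = b i := by
  cases n with
  | zero => simp at hi
  | succ n =>
    rw [Nat.factorial_succ, Nat.cast_mul] at hn
    rw [pderiv_one_binomForm, pderiv_zero_binomForm] at h
    exact (binomForm_eq_binomForm_iff (right_ne_zero_of_mul hn)).mp
      (mul_left_cancel₀ (C_ne_zero.mpr (left_ne_zero_of_mul hn)) h) i (Nat.le_of_lt_succ hi)

end IsDomain

section Field

variable {K : Type*} [Field K]

theorem exists_eq_binomForm {n : ℕ} (hn : (n.factorial : K) ≠ 0) {f : MvPolynomial (Fin 2) K}
    (hf : f.IsHomogeneous n) : ∃ a, f = binomForm n a := by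
  induction n generalizing f with
  | zero =>
    exact ⟨fun _ => coeff 0 f, totalDegree_eq_zero_iff_eq_C.mp (by simpa using hf.totalDegree_le)⟩
  | succ n ih =>
    rw [Nat.factorial_succ, Nat.cast_mul] at hn
    obtain ⟨a, ha⟩ := ih (right_ne_zero_of_mul hn) (hf.pderiv (i := 0))
    obtain ⟨b, hb⟩ := ih (right_ne_zero_of_mul hn) (hf.pderiv (i := 1))
    have hab : ∀ {i}, i < n → a (i + 1) = b i :=
      eq_of_pderiv_one_binomForm_eq (right_ne_zero_of_mul hn) (by rw [← ha, ← hb, pderiv_comm])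
    have hmix : binomForm n (fun i => if i < n then a (i + 1) else b n) = binomForm n b :=
      binomForm_congr fun i hi => by
        obtain hi | rfl := hi.lt_or_eq
        · simp only [hi, if_true, hab]
        · simp
    have euler := hf.sum_X_mul_pderiv
    rw [Fin.sum_univ_two, ha, hb] at euler
    refine ⟨fun i => ((n + 1 : ℕ) : K)⁻¹ * if i ≤ n then a i else b n, ?_⟩
    rw [binomForm_const_mul, binomForm, binomForm_congr (b := a) fun i hi => by simp [hi]]
    simp only [Nat.succ_le_iff]
    rw [hmix, euler, nsmul_eq_mul, ← mul_assoc, ← C_eq_coe_nat, ← map_mul,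
      inv_mul_cancel₀ (left_ne_zero_of_mul hn), map_one, one_mul]

theorem transvectant_binomForm {r₁ r₂ h : ℕ} (h₁ : h ≤ r₁) (h₂ : h ≤ r₂)
    (hr₁ : (r₁.factorial : K) ≠ 0) (hr₂ : (r₂.factorial : K) ≠ 0) (a b : ℕ → K) :
    transvectant r₁ r₂ h (binomForm r₁ a) (binomForm r₂ b) =
      ∑ j ∈ Finset.range (h + 1), C ((-1) ^ j * (h.choose j : K)) *
        (binomForm (r₁ - h) (fun i => a (i + j)) *
          binomForm (r₂ - h) fun i => b (i + (h - j))) := by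
  have hscalar : (((r₁ - h).factorial * (r₂ - h).factorial : ℕ) : K) /
      ((r₁.factorial * r₂.factorial : ℕ) : K) * r₁.descFactorial h * r₂.descFactorial h = 1 := by
    rw [div_mul_eq_mul_div, div_mul_eq_mul_div, ← Nat.cast_mul, ← Nat.cast_mul, div_eq_one_iff_eq
      (by simpa using ⟨hr₁, hr₂⟩), ← Nat.factorial_mul_descFactorial h₁,
      ← Nat.factorial_mul_descFactorial h₂]
    congr 1
    ring
  rw [transvectant, Finset.mul_sum]
  refine Finset.sum_congr rfl fun j hj => ?_
  have hj : j ≤ h := Finset.mem_range_succ_iff.mp hj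
  rw [dX_dZ_binomForm (by lia), dX_dZ_binomForm (by lia), Nat.sub_add_cancel hj,
    Nat.add_sub_cancel' hj]
  have hC := congrArg (C (σ := Fin 2)) hscalar
  rw [map_mul, map_mul, map_one] at hC
  linear_combination C ((-1) ^ j * (h.choose j : K)) *
    (binomForm (r₁ - h) (fun i => a (i + j)) *
      binomForm (r₂ - h) (fun i => b (i + (h - j)))) * hC

end Field

section CommRing

variable {R : Type*} [CommRing R]

/-- Cayley's Omega process `(∂₀ ⊗ ∂₁ - ∂₁ ⊗ ∂₀) ^ h` followed by multiplication: the `h`-th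
transvectant without its scalar factor, as a bilinear map. -/
noncomputable def omegaProcess :
    ℕ → MvPolynomial (Fin 2) R →ₗ[R] MvPolynomial (Fin 2) R →ₗ[R] MvPolynomial (Fin 2) R
  | 0 => LinearMap.mul R _
  | h + 1 =>
    (omegaProcess h).compl₁₂ (pderiv 0).toLinearMap (pderiv 1).toLinearMap -
      (omegaProcess h).compl₁₂ (pderiv 1).toLinearMap (pderiv 0).toLinearMap

theorem omegaProcess_zero (f g : MvPolynomial (Fin 2) R) : omegaProcess 0 f g = f * g := rfl

theorem omegaProcess_succ (h : ℕ) (f g : MvPolynomial (Fin 2) R) :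
    omegaProcess (h + 1) f g =
      omegaProcess h (pderiv 0 f) (pderiv 1 g) - omegaProcess h (pderiv 1 f) (pderiv 0 g) := rfl

open Finset.HasAntidiagonal in
theorem omegaProcess_eq_sum_antidiagonal (h : ℕ) (f g : MvPolynomial (Fin 2) R) :
    omegaProcess h f g = ∑ ij ∈ antidiagonal h,
      (h.choose ij.1 : MvPolynomial (Fin 2) R) *
        ((-1) ^ ij.1 * (dX ij.2 (dZ ij.1 f) * dX ij.1 (dZ ij.2 g))) := by
  induction h generalizing f g with
  | zero => simp [omegaProcess_zero, dX, dZ]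
  | succ h ih =>
    rw [Finset.sum_antidiagonal_choose_succ_mul
      (fun j i => (-1) ^ j * (dX i (dZ j f) * dX j (dZ i g))), omegaProcess_succ, ih, ih,
      sub_eq_add_neg, ← Finset.sum_neg_distrib]
    refine congrArg₂ (· + ·) (Finset.sum_congr rfl fun ij _ => ?_)
      (Finset.sum_congr rfl fun ij hij => ?_)
    · rw [dZ_pderiv_zero, dX_pderiv_zero, dZ_pderiv_one]
    · rw [dZ_pderiv_zero, dX_pderiv_zero, dZ_pderiv_one,
        ← Nat.choose_symm_of_eq_add (mem_antidiagonal.mp hij).symm]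
      ring

/-- The linear substitution `X j ↦ M j 0 * X 0 + M j 1 * X 1`. -/
noncomputable def linSubst (M : Matrix (Fin 2) (Fin 2) R) :
    MvPolynomial (Fin 2) R →ₐ[R] MvPolynomial (Fin 2) R :=
  bind₁ fun j => C (M j 0) * X 0 + C (M j 1) * X 1

@[simp]
theorem linSubst_C (M : Matrix (Fin 2) (Fin 2) R) (c : R) : linSubst M (C c) = C c :=
  bind₁_C_right _ c

@[simp]
theorem linSubst_X (M : Matrix (Fin 2) (Fin 2) R) (j : Fin 2) :
    linSubst M (X j) = C (M j 0) * X 0 + C (M j 1) * X 1 :=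
  bind₁_X_right _ j

theorem linSubst_shear_binomForm (n : ℕ) (c : R) (a : ℕ → R) :
    linSubst !![1, 0; c, 1] (binomForm n a) =
      binomForm n fun i => (fun (b : ℕ → R) j => b j + c * b (j + 1))^[n - i] a i := by
  induction n generalizing a with
  | zero => simp [binomForm]
  | succ n ih =>
    have shift (m i : ℕ) : (fun (b : ℕ → R) j => b j + c * b (j + 1))^[m] (fun j => a (j + 1)) i =
        (fun (b : ℕ → R) j => b j + c * b (j + 1))^[m] a (i + 1) := by
      induction m generalizing i with
      | zero => rfl
      | succ m ihm => simp only [Function.iterate_succ_apply', ihm]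
    have hsum : linSubst !![1, 0; c, 1] (binomForm (n + 1) a) =
        X 0 * linSubst !![1, 0; c, 1] (binomForm n fun j => a j + c * a (j + 1)) +
          X 1 * linSubst !![1, 0; c, 1] (binomForm n fun j => a (j + 1)) := by
      rw [binomForm, binomForm_add, binomForm_const_mul]
      simp only [Fin.isValue, map_add, map_mul, linSubst_X, Matrix.of_apply, Matrix.cons_val',
        Matrix.cons_val_zero, Matrix.cons_val_fin_one, C_1, one_mul, Matrix.cons_val_one, C_0,
        zero_mul, add_zero, algHom_C, algebraMap_eq]
      ring
    rw [hsum, ih, ih, binomForm]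
    congr 2
    · refine binomForm_congr fun i hi => ?_
      rw [Nat.succ_sub hi, Function.iterate_succ_apply]
    · refine binomForm_congr fun i _ => ?_
      rw [shift, Nat.add_sub_add_right]

theorem linSubst_linSubst (M N : Matrix (Fin 2) (Fin 2) R) (f : MvPolynomial (Fin 2) R) :
    linSubst M (linSubst N f) = linSubst (N * M) f := by
  have h : (linSubst M).comp (linSubst N) = linSubst (N * M) := by
    refine algHom_ext fun j => ?_
    simp only [AlgHom.comp_apply, linSubst_X, map_add, map_mul, linSubst_C, Matrix.mul_apply,
      Fin.sum_univ_two]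
    ring
  exact DFunLike.congr_fun h f

theorem linSubst_one (f : MvPolynomial (Fin 2) R) : linSubst 1 f = f := by
  have h : linSubst (1 : Matrix (Fin 2) (Fin 2) R) = AlgHom.id R _ := by
    refine algHom_ext fun j => ?_
    fin_cases j <;> simp
  exact DFunLike.congr_fun h f

theorem isHomogeneous_linSubst (M : Matrix (Fin 2) (Fin 2) R) {n : ℕ}
    {f : MvPolynomial (Fin 2) R} (hf : f.IsHomogeneous n) : (linSubst M f).IsHomogeneous n := by
  simpa [linSubst] using hf.aeval (fun j => C (M j 0) * X 0 + C (M j 1) * X 1) fun j =>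
    ((isHomogeneous_X R 0).C_mul _).add ((isHomogeneous_X R 1).C_mul _)

theorem eval_linSubst (M : Matrix (Fin 2) (Fin 2) R) (v : Fin 2 → R)
    (f : MvPolynomial (Fin 2) R) : eval v (linSubst M f) = eval (M.mulVec v) f := by
  rw [linSubst, ← aeval_eq_eval, aeval_bind₁, aeval_eq_eval]
  congr 2
  ext j
  simp [Matrix.mulVec, dotProduct, Fin.sum_univ_two]

theorem constantCoeff_linSubst (M : Matrix (Fin 2) (Fin 2) R) (f : MvPolynomial (Fin 2) R) :
    constantCoeff (linSubst M f) = constantCoeff f := by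
  induction f using MvPolynomial.induction_on with
  | C c => rw [linSubst_C]
  | add p q hp hq => rw [map_add, map_add, map_add, hp, hq]
  | mul_X p j _ => simp

theorem pderiv_linSubst (M : Matrix (Fin 2) (Fin 2) R) (l : Fin 2) (f : MvPolynomial (Fin 2) R) :
    pderiv l (linSubst M f) =
      M 0 l • linSubst M (pderiv 0 f) + M 1 l • linSubst M (pderiv 1 f) := by
  induction f using MvPolynomial.induction_on with
  | C c => simp
  | add p q hp hq => simp only [map_add, hp, hq, smul_add]; ring
  | mul_X p j hp =>
    simp only [map_mul, Derivation.leibniz, hp, linSubst_X, map_add, smul_eq_mul, pderiv_C,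
      smul_eq_C_mul]
    fin_cases j <;> fin_cases l <;> simp [pderiv_X] <;> ring

theorem omegaProcess_linSubst (M : Matrix (Fin 2) (Fin 2) R) (h : ℕ)
    (f g : MvPolynomial (Fin 2) R) :
    omegaProcess h (linSubst M f) (linSubst M g) =
      M.det ^ h • linSubst M (omegaProcess h f g) := by
  induction h generalizing f g with
  | zero => simp [omegaProcess_zero]
  | succ h ih =>
    simp only [omegaProcess_succ, pderiv_linSubst, map_add, map_smul, LinearMap.add_apply,
      LinearMap.smul_apply, ih, map_sub, pow_succ, Matrix.det_fin_two]
    module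

end CommRing

section Covariant

variable {K : Type*} [Field K]

theorem transvectant_eq_omegaProcess (r₁ r₂ h : ℕ) (f g : MvPolynomial (Fin 2) K) :
    transvectant r₁ r₂ h f g =
      ((((r₁ - h).factorial * (r₂ - h).factorial : ℕ) : K) /
        ((r₁.factorial * r₂.factorial : ℕ) : K)) • omegaProcess h f g := by
  rw [transvectant, omegaProcess_eq_sum_antidiagonal,
    Finset.Nat.sum_antidiagonal_eq_sum_range_succ_mk, smul_eq_C_mul]
  refine congrArg (C _ * ·) (Finset.sum_congr rfl fun j _ => ?_)
  simp only [map_mul, map_pow, map_neg, map_one, map_natCast]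
  ring

theorem transvectant_smul_smul (r₁ r₂ h : ℕ) (c d : K) (f g : MvPolynomial (Fin 2) K) :
    transvectant r₁ r₂ h (c • f) (d • g) = (c * d) • transvectant r₁ r₂ h f g := by
  simp only [transvectant_eq_omegaProcess, map_smul, LinearMap.smul_apply]
  module

theorem transvectant_linSubst (M : Matrix (Fin 2) (Fin 2) K) (r₁ r₂ h : ℕ)
    (f g : MvPolynomial (Fin 2) K) :
    transvectant r₁ r₂ h (linSubst M f) (linSubst M g) =
      M.det ^ h • linSubst M (transvectant r₁ r₂ h f g) := by
  simp only [transvectant_eq_omegaProcess, omegaProcess_linSubst, map_smul]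
  module

/-- `F` is a covariant of weight `w`: it commutes with linear substitutions up to the `w`-th power
of the determinant. -/
def IsCovariant (w : ℕ) (F : MvPolynomial (Fin 2) K → MvPolynomial (Fin 2) K) : Prop :=
  ∀ M f, F (linSubst M f) = M.det ^ w • linSubst M (F f)

/-- `J` is an invariant of weight `w`: it is unchanged by linear substitutions up to the `w`-th
power of the determinant. -/
def IsInvariant (w : ℕ) (J : MvPolynomial (Fin 2) K → K) : Prop :=
  ∀ M f, J (linSubst M f) = M.det ^ w * J f

theorem isCovariant_id : IsCovariant 0 (id : MvPolynomial (Fin 2) K → MvPolynomial (Fin 2) K) :=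
  fun M f => by rw [pow_zero, one_smul, id, id]

theorem IsCovariant.transvectant {u v : ℕ} {F G : MvPolynomial (Fin 2) K → MvPolynomial (Fin 2) K}
    (hF : IsCovariant u F) (hG : IsCovariant v G) (r₁ r₂ h : ℕ) :
    IsCovariant (u + v + h) fun f => transvectant r₁ r₂ h (F f) (G f) := fun M f => by
  simp only [hF M f, hG M f, transvectant_smul_smul, transvectant_linSubst, smul_smul, pow_add]

theorem IsCovariant.isInvariant_constantCoeff {w : ℕ}
    {F : MvPolynomial (Fin 2) K → MvPolynomial (Fin 2) K} (hF : IsCovariant w F) :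
    IsInvariant w fun f => constantCoeff (F f) := fun M f => by
  simp only [hF M f, constantCoeff_smul, constantCoeff_linSubst, smul_eq_mul]

theorem isCovariant_covG : IsCovariant (K := K) 4 covG :=
  isCovariant_id.transvectant isCovariant_id 8 8 4

theorem isCovariant_covK : IsCovariant (K := K) 6 covK :=
  isCovariant_id.transvectant isCovariant_id 8 8 6

theorem isCovariant_covH : IsCovariant (K := K) 14 covH :=
  isCovariant_covK.transvectant isCovariant_covK 4 4 2

theorem isCovariant_covM : IsCovariant (K := K) 10 covM :=
  isCovariant_id.transvectant isCovariant_covK 8 4 4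

theorem isCovariant_covN : IsCovariant (K := K) 18 covN :=
  isCovariant_id.transvectant isCovariant_covH 8 4 4

theorem isCovariant_covP : IsCovariant (K := K) 14 covP :=
  isCovariant_covG.transvectant isCovariant_covK 8 4 4

theorem isCovariant_covQ : IsCovariant (K := K) 22 covQ :=
  isCovariant_covG.transvectant isCovariant_covH 8 4 4

theorem isInvariant_shJ2 : IsInvariant (K := K) 8 shJ2 :=
  (isCovariant_id.transvectant isCovariant_id 8 8 8).isInvariant_constantCoeff

theorem isInvariant_shJ3 : IsInvariant (K := K) 12 shJ3 :=
  (isCovariant_id.transvectant isCovariant_covG 8 8 8).isInvariant_constantCoeff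

theorem isInvariant_shJ4 : IsInvariant (K := K) 16 shJ4 :=
  (isCovariant_covK.transvectant isCovariant_covK 4 4 4).isInvariant_constantCoeff

theorem isInvariant_shJ5 : IsInvariant (K := K) 20 shJ5 :=
  (isCovariant_covM.transvectant isCovariant_covK 4 4 4).isInvariant_constantCoeff

theorem isInvariant_shJ6 : IsInvariant (K := K) 24 shJ6 :=
  (isCovariant_covK.transvectant isCovariant_covH 4 4 4).isInvariant_constantCoeff

theorem isInvariant_shJ7 : IsInvariant (K := K) 28 shJ7 :=
  (isCovariant_covM.transvectant isCovariant_covH 4 4 4).isInvariant_constantCoeff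

theorem isInvariant_shJ8 : IsInvariant (K := K) 32 shJ8 :=
  (isCovariant_covP.transvectant isCovariant_covH 4 4 4).isInvariant_constantCoeff

theorem isInvariant_shJ9 : IsInvariant (K := K) 36 shJ9 :=
  (isCovariant_covN.transvectant isCovariant_covH 4 4 4).isInvariant_constantCoeff

theorem isInvariant_shJ10 : IsInvariant (K := K) 40 shJ10 :=
  (isCovariant_covQ.transvectant isCovariant_covH 4 4 4).isInvariant_constantCoeff

end Covariant

section GLEquiv

variable {K : Type*} [Field K] {f g p : MvPolynomial (Fin 2) K}

/-- Two binary forms are `GL₂(K)`-equivalent if an invertible linear substitution carries one to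
the other. -/
def GLEquiv (f g : MvPolynomial (Fin 2) K) : Prop :=
  ∃ M : Matrix (Fin 2) (Fin 2) K, IsUnit M.det ∧ f = linSubst M g

theorem GLEquiv.symm (h : GLEquiv f g) : GLEquiv g f := by
  obtain ⟨M, hM, rfl⟩ := h
  refine ⟨M⁻¹, Matrix.isUnit_nonsing_inv_det M hM, ?_⟩
  rw [linSubst_linSubst, Matrix.mul_nonsing_inv M hM, linSubst_one]

theorem GLEquiv.trans (h : GLEquiv f g) (h' : GLEquiv g p) : GLEquiv f p := by
  obtain ⟨M, hM, rfl⟩ := h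
  obtain ⟨N, hN, rfl⟩ := h'
  exact ⟨N * M, by rw [Matrix.det_mul]; exact hN.mul hM, linSubst_linSubst M N p⟩

theorem glEquiv_linSubst {M : Matrix (Fin 2) (Fin 2) K} (hM : IsUnit M.det)
    (f : MvPolynomial (Fin 2) K) : GLEquiv f (linSubst M f) :=
  GLEquiv.symm ⟨M, hM, rfl⟩

theorem GLEquiv.isHomogeneous (h : GLEquiv f g) {n : ℕ} (hf : f.IsHomogeneous n) :
    g.IsHomogeneous n := by
  obtain ⟨M, -, rfl⟩ := h.symm
  exact isHomogeneous_linSubst M hf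

theorem GLEquiv.squarefree (h : GLEquiv f g) (hf : Squarefree f) : Squarefree g := by
  obtain ⟨M, hM, rfl⟩ := h
  intro x hx
  have hunit : IsUnit (linSubst M x) := hf _ (by simpa only [map_mul] using map_dvd (linSubst M) hx)
  simpa only [linSubst_linSubst, Matrix.mul_nonsing_inv M hM, linSubst_one] using
    hunit.map (linSubst M⁻¹)

theorem IsInvariant.eq_zero_iff_of_glEquiv {w : ℕ} {J : MvPolynomial (Fin 2) K → K}
    (hJ : IsInvariant w J) (h : GLEquiv f g) : J f = 0 ↔ J g = 0 := by
  obtain ⟨M, hM, rfl⟩ := h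
  rw [hJ, mul_eq_zero, or_iff_right (pow_ne_zero w hM.ne_zero)]

theorem IsCovariant.exists_glEquiv_of_glEquiv {w : ℕ}
    {F : MvPolynomial (Fin 2) K → MvPolynomial (Fin 2) K}
    (hF : IsCovariant w F) (h : GLEquiv (F f) p) :
    ∃ g, GLEquiv f g ∧ ∃ d : K, d ≠ 0 ∧ F g = d • p := by
  obtain ⟨M, hM, rfl⟩ := h.symm
  exact ⟨linSubst M f, glEquiv_linSubst hM f, M.det ^ w, pow_ne_zero w hM.ne_zero, hF M f⟩

/-- The relations `J₂ = J₄ = J₅ = J₆ = J₈ = J₉ = J₁₀ = 0` that cut out the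
`GL₂(K)`-orbit of `X⁷Z - Z⁸` among the squarefree octics. -/
structure ShiodaRelations (f : MvPolynomial (Fin 2) K) : Prop where
  shJ2_eq_zero : shJ2 f = 0
  shJ4_eq_zero : shJ4 f = 0
  shJ5_eq_zero : shJ5 f = 0
  shJ6_eq_zero : shJ6 f = 0
  shJ8_eq_zero : shJ8 f = 0
  shJ9_eq_zero : shJ9 f = 0
  shJ10_eq_zero : shJ10 f = 0

theorem ShiodaRelations.of_glEquiv (hf : ShiodaRelations f) (h : GLEquiv f g) :
    ShiodaRelations g where
  shJ2_eq_zero := (isInvariant_shJ2.eq_zero_iff_of_glEquiv h).mp hf.shJ2_eq_zero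
  shJ4_eq_zero := (isInvariant_shJ4.eq_zero_iff_of_glEquiv h).mp hf.shJ4_eq_zero
  shJ5_eq_zero := (isInvariant_shJ5.eq_zero_iff_of_glEquiv h).mp hf.shJ5_eq_zero
  shJ6_eq_zero := (isInvariant_shJ6.eq_zero_iff_of_glEquiv h).mp hf.shJ6_eq_zero
  shJ8_eq_zero := (isInvariant_shJ8.eq_zero_iff_of_glEquiv h).mp hf.shJ8_eq_zero
  shJ9_eq_zero := (isInvariant_shJ9.eq_zero_iff_of_glEquiv h).mp hf.shJ9_eq_zero
  shJ10_eq_zero := (isInvariant_shJ10.eq_zero_iff_of_glEquiv h).mp hf.shJ10_eq_zero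

end GLEquiv

section Coefficients

variable {K : Type*} [Field K]

theorem constantCoeff_transvectant_four_four_four (h4 : ((4).factorial : K) ≠ 0) (a b : ℕ → K) :
    constantCoeff (transvectant 4 4 4 (binomForm 4 a) (binomForm 4 b)) =
      a 0 * b 4 - 4 * a 1 * b 3 + 6 * a 2 * b 2 - 4 * a 3 * b 1 + a 4 * b 0 := by
  rw [transvectant_binomForm le_rfl le_rfl h4 h4]
  simp only [tsub_self, Nat.reduceSub, zero_add, binomForm, Finset.sum_range_succ,
    Finset.range_one, Finset.sum_singleton, Nat.choose, map_add, map_mul, constantCoeff_C, map_neg,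
    map_pow, map_one]
  ring

theorem transvectant_eight_four_four (h8 : ((8).factorial : K) ≠ 0) (a b : ℕ → K) :
    transvectant 8 4 4 (binomForm 8 a) (binomForm 4 b) =
      binomForm 4 fun i => a i * b 4 - 4 * a (i + 1) * b 3 + 6 * a (i + 2) * b 2
        - 4 * a (i + 3) * b 1 + a (i + 4) * b 0 := by
  rw [transvectant_binomForm (by norm_num) le_rfl h8
    (natCast_factorial_ne_zero_of_le h8 (by norm_num))]
  simp only [C_mul, C_pow, C_neg, C_1, map_natCast, Nat.reduceSub, binomForm,
    Finset.sum_range_succ, Nat.choose, C_add, C_sub, C_ofNat]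
  ring

theorem shJ2_binomForm (h8 : ((8).factorial : K) ≠ 0) (a : ℕ → K) :
    shJ2 (binomForm 8 a) =
      2 * (a 0 * a 8 - 8 * a 1 * a 7 + 28 * a 2 * a 6 - 56 * a 3 * a 5 + 35 * a 4 ^ 2) := by
  rw [shJ2, transvectant_binomForm le_rfl le_rfl h8 h8]
  simp only [tsub_self, binomForm, Finset.sum_range_succ, Finset.range_one, Finset.sum_singleton,
    Nat.choose, map_add, map_mul, constantCoeff_C, map_neg, map_pow, map_one]
  ring

/-- The coefficients of the covariant `𝔨` of `binomForm 8 a`, with respect to `binomForm 4`. -/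
def covKCoeffs (a : ℕ → K) : ℕ → K
  | 0 => 2 * a 0 * a 6 - 12 * a 1 * a 5 + 30 * a 2 * a 4 - 20 * a 3 ^ 2
  | 1 => a 0 * a 7 - 5 * a 1 * a 6 + 9 * a 2 * a 5 - 5 * a 3 * a 4
  | 2 => (a 0 * a 8 - 2 * a 1 * a 7 - 8 * a 2 * a 6 + 34 * a 3 * a 5 - 25 * a 4 ^ 2) / 3
  | 3 => a 1 * a 8 - 5 * a 2 * a 7 + 9 * a 3 * a 6 - 5 * a 4 * a 5
  | 4 => 2 * a 2 * a 8 - 12 * a 3 * a 7 + 30 * a 4 * a 6 - 20 * a 5 ^ 2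
  | _ => 0

theorem covK_binomForm (h8 : ((8).factorial : K) ≠ 0) (a : ℕ → K) :
    covK (binomForm 8 a) = binomForm 4 (covKCoeffs a) := by
  have h3 : (3 : K) ≠ 0 := ofNat_ne_zero_of_dvd h8 (by decide)
  have hmid : C 3 * C (covKCoeffs a 2) = C (σ := Fin 2)
      (a 0 * a 8 - 2 * a 1 * a 7 - 8 * a 2 * a 6 + 34 * a 3 * a 5 - 25 * a 4 ^ 2) := by
    rw [← map_mul, covKCoeffs, mul_div_cancel₀ _ h3]
  rw [covK, transvectant_binomForm (by norm_num) (by norm_num) h8 h8]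
  simp only [C_ofNat, covKCoeffs, C_sub, C_add, C_mul, C_pow, C_neg, C_1, map_natCast, binomForm,
    Finset.sum_range_succ, Nat.choose] at hmid ⊢
  linear_combination (-2) * X 0 ^ 2 * X 1 ^ 2 * hmid

/-- The coefficients of the Hessian `(q, q)₂` of the quartic `q = binomForm 4 k`, with respect to
`binomForm 4`. -/
def hessianCoeffs (k : ℕ → K) : ℕ → K
  | 0 => 2 * (k 0 * k 2 - k 1 ^ 2)
  | 1 => k 0 * k 3 - k 1 * k 2
  | 2 => (k 0 * k 4 + 2 * k 1 * k 3 - 3 * k 2 ^ 2) / 3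
  | 3 => k 1 * k 4 - k 2 * k 3
  | 4 => 2 * (k 2 * k 4 - k 3 ^ 2)
  | _ => 0

theorem transvectant_four_four_two (h4 : ((4).factorial : K) ≠ 0) (k : ℕ → K) :
    transvectant 4 4 2 (binomForm 4 k) (binomForm 4 k) = binomForm 4 (hessianCoeffs k) := by
  have h3 : (3 : K) ≠ 0 := ofNat_ne_zero_of_dvd h4 (by decide)
  have hmid : C 3 * C (hessianCoeffs k 2) = C (σ := Fin 2)
      (k 0 * k 4 + 2 * k 1 * k 3 - 3 * k 2 ^ 2) := by
    rw [← map_mul, hessianCoeffs, mul_div_cancel₀ _ h3]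
  rw [transvectant_binomForm (by norm_num) (by norm_num) h4 h4]
  simp only [C_ofNat, hessianCoeffs, C_sub, C_add, C_mul, C_pow, C_neg, C_1, map_natCast,
    binomForm, Finset.sum_range_succ, Nat.choose] at hmid ⊢
  linear_combination (-2) * X 0 ^ 2 * X 1 ^ 2 * hmid

end Coefficients

section LinearAlgebra

variable {K : Type*} [Field K]

theorem exists_eval_eq_zero [IsAlgClosed K] {n : ℕ} (hn : n ≠ 0) {f : MvPolynomial (Fin 2) K}
    (hf : f.IsHomogeneous n) : ∃ v : Fin 2 → K, v ≠ 0 ∧ eval v f = 0 := by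
  set p : Polynomial K := aeval ![Polynomial.X, 1] f with hp
  by_cases hdeg : p.degree = 0
  · refine ⟨![1, 0], by simp, ?_⟩
    rw [← Polynomial.homogenize_eq_of_isHomogeneous hf rfl, ← hp,
      Polynomial.eq_C_of_degree_eq_zero hdeg, Polynomial.homogenize_C]
    simp [hn]
  · obtain ⟨t, ht⟩ := IsAlgClosed.exists_root p hdeg
    refine ⟨![t, 1], by simp, ?_⟩
    rw [Polynomial.IsRoot, ← Polynomial.coe_aeval_eq_eval, hp, comp_aeval_apply,
      aeval_eq_eval] at ht
    rw [← ht]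
    congr 2
    ext j
    fin_cases j <;> simp

theorem exists_isUnit_det_mulVec_eq {v : Fin 2 → K} (hv : v ≠ 0) :
    ∃ M : Matrix (Fin 2) (Fin 2) K, IsUnit M.det ∧ M.mulVec ![0, 1] = v := by
  by_cases h : v 1 = 0
  · have h0 : v 0 ≠ 0 := fun h0 => hv (funext fun j => by fin_cases j <;> assumption)
    refine ⟨!![0, v 0; 1, 0], by simpa [Matrix.det_fin_two] using h0, ?_⟩
    ext j; fin_cases j <;> simp [h]
  · refine ⟨!![1, v 0; 0, v 1], by simpa [Matrix.det_fin_two] using h, ?_⟩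
    ext j; fin_cases j <;> simp

theorem exists_glEquiv_eval_zero_one_eq_zero [IsAlgClosed K] {n : ℕ} (hn : n ≠ 0)
    {f : MvPolynomial (Fin 2) K} (hf : f.IsHomogeneous n) :
    ∃ g, GLEquiv f g ∧ eval ![0, 1] g = 0 := by
  obtain ⟨v, hv, hfv⟩ := exists_eval_eq_zero hn hf
  obtain ⟨M, hM, rfl⟩ := exists_isUnit_det_mulVec_eq hv
  exact ⟨linSubst M f, glEquiv_linSubst hM f, by rw [eval_linSubst, hfv]⟩

theorem exists_glEquiv_binomForm_apply_eq_zero [IsAlgClosed K] {n : ℕ} (hn : n ≠ 0)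
    (hn! : (n.factorial : K) ≠ 0) {f : MvPolynomial (Fin 2) K} (hf : f.IsHomogeneous n) :
    ∃ a, GLEquiv f (binomForm n a) ∧ a n = 0 := by
  obtain ⟨g, hfg, hg⟩ := exists_glEquiv_eval_zero_one_eq_zero hn hf
  obtain ⟨a, rfl⟩ := exists_eq_binomForm hn! (hfg.isHomogeneous hf)
  exact ⟨a, hfg, by rwa [eval_zero_one_binomForm] at hg⟩

theorem smul_binomForm_single (n i : ℕ) (c d : K) :
    d • binomForm n (Pi.single i c) = binomForm n (Pi.single i (d * c)) := by
  rw [smul_eq_C_mul, ← binomForm_const_mul]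
  exact binomForm_congr fun j _ => by simp [Pi.single_apply]

end LinearAlgebra

section Quartic

variable {K : Type*} [Field K]

/-- The invariant `I = (q, q)₄` of a binary quartic `q`. -/
noncomputable def quarticI (q : MvPolynomial (Fin 2) K) : K :=
  constantCoeff (transvectant 4 4 4 q q)

/-- The invariant `J = (q, (q, q)₂)₄` of a binary quartic `q`. -/
noncomputable def quarticJ (q : MvPolynomial (Fin 2) K) : K :=
  constantCoeff (transvectant 4 4 4 q (transvectant 4 4 2 q q))

theorem isInvariant_quarticI : IsInvariant (K := K) 4 quarticI :=
  (isCovariant_id.transvectant isCovariant_id 4 4 4).isInvariant_constantCoeff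

theorem isInvariant_quarticJ : IsInvariant (K := K) 6 quarticJ :=
  (isCovariant_id.transvectant (isCovariant_id.transvectant isCovariant_id 4 4 2)
    4 4 4).isInvariant_constantCoeff

theorem quarticI_binomForm (h4 : ((4).factorial : K) ≠ 0) (k : ℕ → K) :
    quarticI (binomForm 4 k) = 2 * (k 0 * k 4 - 4 * k 1 * k 3 + 3 * k 2 ^ 2) := by
  rw [quarticI, constantCoeff_transvectant_four_four_four h4]
  ring

theorem quarticJ_binomForm (h4 : ((4).factorial : K) ≠ 0) (k : ℕ → K) :
    quarticJ (binomForm 4 k) = 6 * (k 0 * k 2 * k 4 + 2 * k 1 * k 2 * k 3 - k 2 ^ 3 -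
      k 0 * k 3 ^ 2 - k 1 ^ 2 * k 4) := by
  have h3 : (3 : K) ≠ 0 := ofNat_ne_zero_of_dvd h4 (by decide)
  rw [quarticJ, transvectant_four_four_two h4, constantCoeff_transvectant_four_four_four h4]
  simp only [hessianCoeffs]
  field_simp
  ring

theorem glEquiv_binomForm_four_single_one_of_apply_one_ne_zero (h4 : ((4).factorial : K) ≠ 0)
    {k : ℕ → K} (h₁ : k 1 ≠ 0) (h₂ : k 2 = 0) (h₃ : k 3 = 0) (h₄ : k 4 = 0) :
    GLEquiv (binomForm 4 k) (binomForm 4 (Pi.single 1 (k 1))) := by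
  have h4' : (4 : K) ≠ 0 := ofNat_ne_zero_of_dvd h4 (by decide)
  obtain ⟨u, hu⟩ : ∃ u, k 0 = 4 * k 1 * u := ⟨k 0 / (4 * k 1), by field_simp⟩
  refine ⟨!![1, 0; u, 1], by simp [Matrix.det_fin_two], ?_⟩
  simp only [binomForm, hu, C_ofNat, zero_add, Nat.reduceAdd, h₂, C_0, mul_zero, add_zero, h₃, h₄,
    ne_eq, zero_ne_one, not_false_eq_true, Pi.single_eq_of_ne, Pi.single_eq_same,
    OfNat.ofNat_ne_one, map_add, map_mul, linSubst_X, Matrix.of_apply, Matrix.cons_val_zero, C_1,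
    Matrix.cons_val_one, algHom_C, algebraMap_eq]
  ring

theorem glEquiv_binomForm_four_single_one_of_apply_three_ne_zero (h4 : ((4).factorial : K) ≠ 0)
    {k : ℕ → K} (hI : quarticI (binomForm 4 k) = 0) (hJ : quarticJ (binomForm 4 k) = 0)
    (h₃ : k 3 ≠ 0) (h₄ : k 4 = 0) :
    GLEquiv (binomForm 4 k) (binomForm 4 (Pi.single 1 (k 3))) := by
  have two : (2 : K) ≠ 0 := ofNat_ne_zero_of_dvd h4 (by decide)
  have four : (4 : K) ≠ 0 := ofNat_ne_zero_of_dvd h4 (by decide)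
  have six : (6 : K) ≠ 0 := ofNat_ne_zero_of_dvd h4 (by decide)
  rw [quarticI_binomForm h4, mul_eq_zero, or_iff_right two] at hI
  rw [quarticJ_binomForm h4, mul_eq_zero, or_iff_right six] at hJ
  obtain ⟨u, hu⟩ : ∃ u, k 2 = 2 * k 3 * u := ⟨k 2 / (2 * k 3), by field_simp⟩
  have hk₁ : k 1 = 3 * k 3 * u ^ 2 := by
    refine mul_left_cancel₀ (mul_ne_zero four h₃) ?_
    rw [h₄, hu] at hI
    linear_combination -hI
  have hk₀ : k 0 = 4 * k 3 * u ^ 3 := by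
    refine mul_left_cancel₀ (pow_ne_zero 2 h₃) ?_
    rw [h₄, hu, hk₁] at hJ
    linear_combination -hJ
  refine ⟨!![u, 1; 1, 0], by simp [Matrix.det_fin_two], ?_⟩
  simp only [binomForm, hk₀, C_ofNat, C_pow, zero_add, hk₁, Nat.reduceAdd, hu, h₄, C_0, mul_zero,
    add_zero, ne_eq, zero_ne_one, not_false_eq_true, Pi.single_eq_of_ne, Pi.single_eq_same,
    OfNat.ofNat_ne_one, map_add, map_mul, linSubst_X, Matrix.of_apply, Matrix.cons_val_zero,
    Matrix.cons_val_one, C_1, algHom_C, algebraMap_eq]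
  ring

theorem exists_glEquiv_single_of_quarticI_eq_zero [IsAlgClosed K] (h4 : ((4).factorial : K) ≠ 0)
    {q : MvPolynomial (Fin 2) K} (hq : q.IsHomogeneous 4) (hI : quarticI q = 0)
    (hJ : quarticJ q = 0) :
    ∃ c : K, GLEquiv q (binomForm 4 (Pi.single 0 c)) ∨
      c ≠ 0 ∧ GLEquiv q (binomForm 4 (Pi.single 1 c)) := by
  obtain ⟨k, hqk, h₄⟩ := exists_glEquiv_binomForm_apply_eq_zero four_ne_zero h4 hq
  rw [isInvariant_quarticI.eq_zero_iff_of_glEquiv hqk] at hI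
  rw [isInvariant_quarticJ.eq_zero_iff_of_glEquiv hqk] at hJ
  by_cases h₃ : k 3 = 0
  · have h₂ : k 2 = 0 := by
      have two : (2 : K) ≠ 0 := ofNat_ne_zero_of_dvd h4 (by decide)
      have three : (3 : K) ≠ 0 := ofNat_ne_zero_of_dvd h4 (by decide)
      simpa [quarticI_binomForm h4, h₃, h₄, two, three] using hI
    by_cases h₁ : k 1 = 0
    · refine ⟨k 0, Or.inl ?_⟩
      rwa [binomForm_congr (b := Pi.single 0 (k 0))] at hqk
      intro i hi
      interval_cases i <;> simp [*]
    · exact ⟨k 1, Or.inr ⟨h₁, hqk.trans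
        (glEquiv_binomForm_four_single_one_of_apply_one_ne_zero h4 h₁ h₂ h₃ h₄)⟩⟩
  · exact ⟨k 3, Or.inr ⟨h₃, hqk.trans
      (glEquiv_binomForm_four_single_one_of_apply_three_ne_zero h4 hI hJ h₃ h₄)⟩⟩

end Quartic

section Octic

variable {K : Type*} [Field K]

theorem isHomogeneous_transvectant_binomForm {r₁ r₂ h : ℕ} (h₁ : h ≤ r₁) (h₂ : h ≤ r₂)
    (hr₁ : (r₁.factorial : K) ≠ 0) (hr₂ : (r₂.factorial : K) ≠ 0) (a b : ℕ → K) :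
    (transvectant r₁ r₂ h (binomForm r₁ a) (binomForm r₂ b)).IsHomogeneous
      ((r₁ - h) + (r₂ - h)) := by
  rw [transvectant_binomForm h₁ h₂ hr₁ hr₂]
  exact IsHomogeneous.sum _ _ _ fun j _ =>
    ((isHomogeneous_binomForm _ _).mul (isHomogeneous_binomForm _ _)).C_mul _

theorem exists_covG_binomForm_eq (h8 : ((8).factorial : K) ≠ 0) (a : ℕ → K) :
    ∃ g, covG (binomForm 8 a) = binomForm 8 g ∧
      g 7 = a 3 * a 8 - 3 * a 4 * a 7 + 2 * a 5 * a 6 ∧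
      g 8 = 2 * (a 4 * a 8 - 4 * a 5 * a 7 + 3 * a 6 ^ 2) := by
  obtain ⟨g, hg⟩ := exists_eq_binomForm h8 (f := covG (binomForm 8 a))
    (isHomogeneous_transvectant_binomForm (h := 4) (by norm_num) (by norm_num) h8 h8 a a)
  have hcov := hg
  rw [covG, transvectant_binomForm (by norm_num) (by norm_num) h8 h8] at hcov
  have eight : (8 : K) ≠ 0 := ofNat_ne_zero_of_dvd h8 (by decide)
  have heval := congrArg (eval ![0, 1]) hcov
  have hderiv := congrArg (fun f => eval ![0, 1] (pderiv 0 f)) hcov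
  refine ⟨g, hg, mul_left_cancel₀ eight ?_, ?_⟩
  · simp only [Nat.reduceAdd, map_natCast, Finset.sum_range_succ, Finset.range_one,
      Finset.sum_singleton, Nat.choose, Nat.cast_one, add_zero, Nat.cast_ofNat, map_add,
      Derivation.leibniz, pderiv_zero_binomForm, smul_eq_mul, map_neg, pderiv_ofNat, mul_zero,
      Derivation.leibniz_pow, Derivation.map_one_eq_zero, neg_zero, nsmul_zero, map_mul,
      eval_zero_one_binomForm, eval_C, eval_ofNat, map_pow, map_one] at hderiv
    linear_combination -hderiv
  · simp only [Nat.succ_eq_add_one, Nat.reduceAdd, map_natCast, Finset.sum_range_succ,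
      Finset.range_one, Finset.sum_singleton, Nat.choose, map_add, map_mul,
      eval_zero_one_binomForm, map_neg, map_pow, map_one] at heval
    linear_combination -heval

theorem exists_glEquiv_covK_eq_single [IsAlgClosed K] (h8 : ((8).factorial : K) ≠ 0)
    {f : MvPolynomial (Fin 2) K} (hf : f.IsHomogeneous 8) (hJ4 : shJ4 f = 0) (hJ6 : shJ6 f = 0) :
    ∃ (a : ℕ → K) (c : K), GLEquiv f (binomForm 8 a) ∧
      (covK (binomForm 8 a) = binomForm 4 (Pi.single 0 c) ∨
        c ≠ 0 ∧ covK (binomForm 8 a) = binomForm 4 (Pi.single 1 c)) := by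
  have exists_octic {i : ℕ} {c : K} (h : GLEquiv (covK f) (binomForm 4 (Pi.single i c))) :
      ∃ (a : ℕ → K) (d : K), d ≠ 0 ∧ GLEquiv f (binomForm 8 a) ∧
        covK (binomForm 8 a) = binomForm 4 (Pi.single i (d * c)) := by
    obtain ⟨g, hfg, d, hd, hgd⟩ := isCovariant_covK.exists_glEquiv_of_glEquiv h
    obtain ⟨a, rfl⟩ := exists_eq_binomForm h8 (hfg.isHomogeneous hf)
    exact ⟨a, d, hd, hfg, by rw [hgd, smul_binomForm_single]⟩
  have hK : (covK f).IsHomogeneous 4 := by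
    obtain ⟨a, rfl⟩ := exists_eq_binomForm h8 hf
    rw [covK_binomForm h8]
    exact isHomogeneous_binomForm 4 _
  obtain ⟨c, hc | ⟨hc, hc'⟩⟩ := exists_glEquiv_single_of_quarticI_eq_zero
    (natCast_factorial_ne_zero_of_le h8 (by norm_num)) hK hJ4 hJ6
  · obtain ⟨a, d, -, hfa, ha⟩ := exists_octic hc
    exact ⟨a, d * c, hfa, Or.inl ha⟩
  · obtain ⟨a, d, hd, hfa, ha⟩ := exists_octic hc'
    exact ⟨a, d * c, hfa, Or.inr ⟨mul_ne_zero hd hc, ha⟩⟩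

section TripleRoot

variable {a : ℕ → K} {c : K}

theorem covH_binomForm_of_covK_eq_single_one (h8 : ((8).factorial : K) ≠ 0)
    (hk : covK (binomForm 8 a) = binomForm 4 (Pi.single 1 c)) :
    covH (binomForm 8 a) = binomForm 4 (Pi.single 0 (-2 * c ^ 2)) := by
  rw [covH, hk, transvectant_four_four_two (natCast_factorial_ne_zero_of_le h8 (by norm_num))]
  refine binomForm_congr fun i hi => ?_
  interval_cases i <;> simp [hessianCoeffs]

theorem shJ5_binomForm_of_covK_eq_single_one (h8 : ((8).factorial : K) ≠ 0)
    (hk : covK (binomForm 8 a) = binomForm 4 (Pi.single 1 c)) :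
    shJ5 (binomForm 8 a) = 16 * c ^ 2 * a 6 := by
  rw [shJ5, covM, hk, transvectant_eight_four_four h8,
    constantCoeff_transvectant_four_four_four (natCast_factorial_ne_zero_of_le h8 (by norm_num))]
  simp only [ne_eq, OfNat.ofNat_ne_one, not_false_eq_true, Pi.single_eq_of_ne, Pi.single_eq_same,
    zero_ne_one]
  ring

theorem shJ7_binomForm_of_covK_eq_single_one (h8 : ((8).factorial : K) ≠ 0)
    (hk : covK (binomForm 8 a) = binomForm 4 (Pi.single 1 c)) :
    shJ7 (binomForm 8 a) = 8 * c ^ 3 * a 7 := by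
  rw [shJ7, covM, covH_binomForm_of_covK_eq_single_one h8 hk, hk, transvectant_eight_four_four h8,
    constantCoeff_transvectant_four_four_four (natCast_factorial_ne_zero_of_le h8 (by norm_num))]
  simp only [ne_eq, OfNat.ofNat_ne_one, not_false_eq_true, Pi.single_eq_of_ne, Pi.single_eq_same,
    zero_ne_one, OfNat.ofNat_ne_zero, one_ne_zero]
  ring

theorem shJ8_binomForm_of_covK_eq_single_one (h8 : ((8).factorial : K) ≠ 0)
    (hk : covK (binomForm 8 a) = binomForm 4 (Pi.single 1 c)) :
    shJ8 (binomForm 8 a) = 8 * c ^ 3 * (a 3 * a 8 - 3 * a 4 * a 7 + 2 * a 5 * a 6) := by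
  obtain ⟨g, hg, hg₇, -⟩ := exists_covG_binomForm_eq h8 a
  rw [shJ8, covP, covH_binomForm_of_covK_eq_single_one h8 hk, hk, hg,
    transvectant_eight_four_four h8,
    constantCoeff_transvectant_four_four_four (natCast_factorial_ne_zero_of_le h8 (by norm_num)),
    ← hg₇]
  simp only [ne_eq, OfNat.ofNat_ne_one, not_false_eq_true, Pi.single_eq_of_ne, Pi.single_eq_same,
    zero_ne_one, OfNat.ofNat_ne_zero, one_ne_zero]
  ring

theorem shJ9_binomForm_of_covK_eq_single_one (h8 : ((8).factorial : K) ≠ 0)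
    (hk : covK (binomForm 8 a) = binomForm 4 (Pi.single 1 c)) :
    shJ9 (binomForm 8 a) = 4 * c ^ 4 * a 8 := by
  rw [shJ9, covN, covH_binomForm_of_covK_eq_single_one h8 hk, transvectant_eight_four_four h8,
    constantCoeff_transvectant_four_four_four (natCast_factorial_ne_zero_of_le h8 (by norm_num))]
  simp only [ne_eq, OfNat.ofNat_ne_zero, not_false_eq_true, Pi.single_eq_of_ne, one_ne_zero,
    Pi.single_eq_same]
  ring

theorem shJ10_binomForm_of_covK_eq_single_one (h8 : ((8).factorial : K) ≠ 0)
    (hk : covK (binomForm 8 a) = binomForm 4 (Pi.single 1 c)) :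
    shJ10 (binomForm 8 a) = 8 * c ^ 4 * (a 4 * a 8 - 4 * a 5 * a 7 + 3 * a 6 ^ 2) := by
  obtain ⟨g, hg, -, hg₈⟩ := exists_covG_binomForm_eq h8 a
  rw [shJ10, covQ, covH_binomForm_of_covK_eq_single_one h8 hk, hg,
    transvectant_eight_four_four h8,
    constantCoeff_transvectant_four_four_four (natCast_factorial_ne_zero_of_le h8 (by norm_num))]
  simp only [ne_eq, OfNat.ofNat_ne_zero, not_false_eq_true, Pi.single_eq_of_ne, one_ne_zero,
    Pi.single_eq_same, hg₈]
  ring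

theorem covKCoeffs_eq_of_covK_eq (h8 : ((8).factorial : K) ≠ 0) {k : ℕ → K}
    (hk : covK (binomForm 8 a) = binomForm 4 k) : ∀ i ≤ 4, covKCoeffs a i = k i := by
  rwa [covK_binomForm h8,
    binomForm_eq_binomForm_iff (natCast_factorial_ne_zero_of_le h8 (by norm_num))] at hk

end TripleRoot

end Octic

section NormalForm

variable {K : Type*} [Field K]

theorem glEquiv_X_pow_mul_X_sub_X_pow [IsAlgClosed K] {n : ℕ} (hn : n ≠ 0) {α β : K} (hα : α ≠ 0)
    (hβ : β ≠ 0) :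
    GLEquiv (C α * X 0 ^ (n + 1) + C β * (X 0 * X 1 ^ n)) (X 0 ^ n * X 1 - X 1 ^ (n + 1)) := by
  obtain ⟨s, hs⟩ := IsAlgClosed.exists_pow_nat_eq (-α) n.succ_pos
  have hs₀ : s ≠ 0 := by
    rintro rfl
    exact hα (by simpa using hs.symm)
  obtain ⟨t, ht⟩ := IsAlgClosed.exists_pow_nat_eq (β / s) (Nat.pos_of_ne_zero hn)
  have ht₀ : t ≠ 0 := by
    rintro rfl
    rw [zero_pow hn] at ht
    exact div_ne_zero hβ hs₀ ht.symm
  have hβ' : C (σ := Fin 2) β = C t ^ n * C s := by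
    rw [← C_pow, ← C_mul, ht, div_mul_cancel₀ β hs₀]
  have hα' : C (σ := Fin 2) α = -C s ^ (n + 1) := by
    rw [← C_pow, hs, C_neg, neg_neg]
  refine ⟨!![0, t; s, 0], ?_, ?_⟩
  · simp [Matrix.det_fin_two, hs₀, ht₀]
  · rw [hβ', hα']
    simp only [map_sub, map_mul, map_pow, linSubst_X, Matrix.of_apply, Matrix.cons_val_zero, C_0,
      Matrix.cons_val_one]
    ring

theorem IsInvariant.eq_zero_of_not_dvd [IsAlgClosed K] {w n : ℕ} [NeZero (n : K)]
    {J : MvPolynomial (Fin 2) K → K} (hJ : IsInvariant w J) (hw : ¬n ∣ w) :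
    J (X 0 ^ n * X 1 - X 1 ^ (n + 1)) = 0 := by
  obtain ⟨ζ, hζ⟩ := HasEnoughRootsOfUnity.exists_primitiveRoot K n
  have hfix : linSubst !![ζ, 0; 0, 1] (X 0 ^ n * X 1 - X 1 ^ (n + 1)) =
      X 0 ^ n * X 1 - X 1 ^ (n + 1) := by
    simp [mul_pow, ← C_pow, hζ.pow_eq_one]
  have hζw : ζ ^ w ≠ 1 := fun h => hw (hζ.dvd_of_pow_eq_one w h)
  have hJζ := hJ !![ζ, 0; 0, 1] (X 0 ^ n * X 1 - X 1 ^ (n + 1))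
  rw [hfix, Matrix.det_fin_two_of, mul_one, mul_zero, sub_zero, eq_comm, mul_left_eq_self₀] at hJζ
  exact hJζ.resolve_left hζw

theorem shiodaRelations_X_pow_mul_X_sub_X_pow [IsAlgClosed K] [NeZero ((7 : ℕ) : K)] :
    ShiodaRelations (X 0 ^ 7 * X 1 - X 1 ^ 8 : MvPolynomial (Fin 2) K) where
  shJ2_eq_zero := isInvariant_shJ2.eq_zero_of_not_dvd (by norm_num)
  shJ4_eq_zero := isInvariant_shJ4.eq_zero_of_not_dvd (by norm_num)
  shJ5_eq_zero := isInvariant_shJ5.eq_zero_of_not_dvd (by norm_num)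
  shJ6_eq_zero := isInvariant_shJ6.eq_zero_of_not_dvd (by norm_num)
  shJ8_eq_zero := isInvariant_shJ8.eq_zero_of_not_dvd (by norm_num)
  shJ9_eq_zero := isInvariant_shJ9.eq_zero_of_not_dvd (by norm_num)
  shJ10_eq_zero := isInvariant_shJ10.eq_zero_of_not_dvd (by norm_num)

theorem shJ3_X_pow_mul_X_sub_X_pow [IsAlgClosed K] [NeZero ((7 : ℕ) : K)] :
    shJ3 (X 0 ^ 7 * X 1 - X 1 ^ 8 : MvPolynomial (Fin 2) K) = 0 :=
  isInvariant_shJ3.eq_zero_of_not_dvd (by norm_num)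

end NormalForm

section TripleRoot

variable {K : Type*} [Field K] {a : ℕ → K} {c : K}

theorem ShiodaRelations.apply_eight_eq_zero
    (h : ShiodaRelations (binomForm 8 a)) (h8 : ((8).factorial : K) ≠ 0)
    (hk : covK (binomForm 8 a) = binomForm 4 (Pi.single 1 c)) (hc : c ≠ 0) : a 8 = 0 := by
  have four : (4 : K) ≠ 0 := ofNat_ne_zero_of_dvd h8 (by decide)
  have hJ9 := h.shJ9_eq_zero
  rw [shJ9_binomForm_of_covK_eq_single_one h8 hk] at hJ9
  exact (mul_eq_zero.mp hJ9).resolve_left (mul_ne_zero four (pow_ne_zero 4 hc))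

theorem ShiodaRelations.apply_six_eq_zero
    (h : ShiodaRelations (binomForm 8 a)) (h8 : ((8).factorial : K) ≠ 0)
    (hk : covK (binomForm 8 a) = binomForm 4 (Pi.single 1 c)) (hc : c ≠ 0) : a 6 = 0 := by
  have sixteen : (16 : K) ≠ 0 := ofNat_ne_zero_of_dvd h8 (by decide)
  have hJ5 := h.shJ5_eq_zero
  rw [shJ5_binomForm_of_covK_eq_single_one h8 hk] at hJ5
  exact (mul_eq_zero.mp hJ5).resolve_left (mul_ne_zero sixteen (pow_ne_zero 2 hc))

theorem ShiodaRelations.apply_eq_zero_of_apply_seven_ne_zero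
    (h : ShiodaRelations (binomForm 8 a)) (h8 : ((8).factorial : K) ≠ 0)
    (hk : covK (binomForm 8 a) = binomForm 4 (Pi.single 1 c)) (hc : c ≠ 0) (ha₇ : a 7 ≠ 0) :
    a 1 = 0 ∧ a 2 = 0 ∧ a 3 = 0 ∧ a 4 = 0 ∧ a 5 = 0 := by
  have nonzero {m : ℕ} [m.AtLeastTwo] (hm : m ∣ Nat.factorial 8) : (ofNat(m) : K) ≠ 0 :=
    ofNat_ne_zero_of_dvd h8 hm
  have ha₈ := h.apply_eight_eq_zero h8 hk hc
  have ha₆ := h.apply_six_eq_zero h8 hk hc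
  have hJ8 := h.shJ8_eq_zero
  have hJ10 := h.shJ10_eq_zero
  rw [shJ8_binomForm_of_covK_eq_single_one h8 hk] at hJ8
  rw [shJ10_binomForm_of_covK_eq_single_one h8 hk] at hJ10
  have hcoeff := covKCoeffs_eq_of_covK_eq h8 hk
  have ha₄ : a 4 = 0 := by
    simpa [ha₆, ha₈, ha₇, hc, nonzero (m := 8) (by decide), nonzero (m := 3) (by decide)] using hJ8
  have ha₅ : a 5 = 0 := by
    simpa [ha₆, ha₈, ha₇, hc, nonzero (m := 8) (by decide), nonzero (m := 4) (by decide)] using hJ10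
  have ha₃ : a 3 = 0 := by
    simpa [covKCoeffs, ha₄, ha₅, ha₆, ha₈, ha₇, nonzero (m := 12) (by decide)] using
      hcoeff 4 (by norm_num)
  have ha₂ : a 2 = 0 := by
    simpa [covKCoeffs, ha₄, ha₅, ha₆, ha₈, ha₇, nonzero (m := 5) (by decide)] using
      hcoeff 3 (by norm_num)
  have ha₁ : a 1 = 0 := by
    simpa [covKCoeffs, ha₃, ha₄, ha₅, ha₆, ha₈, ha₇, nonzero (m := 2) (by decide),
      nonzero (m := 3) (by decide)] using hcoeff 2 (by norm_num)
  exact ⟨ha₁, ha₂, ha₃, ha₄, ha₅⟩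

theorem ShiodaRelations.glEquiv_of_covK_eq_single_one [IsAlgClosed K]
    (h : ShiodaRelations (binomForm 8 a)) (h8 : ((8).factorial : K) ≠ 0)
    (hk : covK (binomForm 8 a) = binomForm 4 (Pi.single 1 c)) (hc : c ≠ 0) (ha₇ : a 7 ≠ 0) :
    GLEquiv (binomForm 8 a) (X 0 ^ 7 * X 1 - X 1 ^ 8) := by
  obtain ⟨ha₁, ha₂, ha₃, ha₄, ha₅⟩ := h.apply_eq_zero_of_apply_seven_ne_zero h8 hk hc ha₇
  have ha₆ := h.apply_six_eq_zero h8 hk hc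
  have ha₈ := h.apply_eight_eq_zero h8 hk hc
  have ha₀ : a 0 ≠ 0 := by
    rintro ha₀
    have hcoeff := covKCoeffs_eq_of_covK_eq h8 hk 1 (by norm_num)
    exact hc (by simpa [covKCoeffs, ha₀, ha₂, ha₃, ha₆] using hcoeff.symm)
  have hform : binomForm 8 a = C (a 0) * X 0 ^ 8 + C (8 * a 7) * (X 0 * X 1 ^ 7) := by
    simp only [binomForm, ha₁, C_0, ha₂, ha₃, ha₄, ha₅, ha₆, ha₈, C_mul, C_ofNat]
    ring
  rw [hform]
  exact glEquiv_X_pow_mul_X_sub_X_pow (by norm_num) ha₀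
    (mul_ne_zero (ofNat_ne_zero_of_dvd h8 (by decide)) ha₇)

end TripleRoot

section QuadrupleRoot

variable {K : Type*} [Field K] {a : ℕ → K} {c : K}

theorem covH_binomForm_of_covK_eq_single_zero (h8 : ((8).factorial : K) ≠ 0)
    (hk : covK (binomForm 8 a) = binomForm 4 (Pi.single 0 c)) : covH (binomForm 8 a) = 0 := by
  have hzero : binomForm 4 (fun _ => 0 : ℕ → K) = 0 := by simp [binomForm]
  rw [covH, hk, transvectant_four_four_two (natCast_factorial_ne_zero_of_le h8 (by norm_num)),
    ← hzero]
  refine binomForm_congr fun i hi => ?_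
  interval_cases i <;> simp [hessianCoeffs]

theorem shJ7_binomForm_of_covK_eq_single_zero (h8 : ((8).factorial : K) ≠ 0)
    (hk : covK (binomForm 8 a) = binomForm 4 (Pi.single 0 c)) : shJ7 (binomForm 8 a) = 0 := by
  rw [shJ7, covH_binomForm_of_covK_eq_single_zero h8 hk]
  simpa using congrArg constantCoeff (transvectant_smul_smul 4 4 4 1 0 (covM (binomForm 8 a)) 0)

theorem shJ5_binomForm_of_covK_eq_single_zero (h8 : ((8).factorial : K) ≠ 0)
    (hk : covK (binomForm 8 a) = binomForm 4 (Pi.single 0 c)) :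
    shJ5 (binomForm 8 a) = c ^ 2 * a 8 := by
  rw [shJ5, covM, hk, transvectant_eight_four_four h8,
    constantCoeff_transvectant_four_four_four (natCast_factorial_ne_zero_of_le h8 (by norm_num))]
  simp only [ne_eq, OfNat.ofNat_ne_zero, not_false_eq_true, Pi.single_eq_of_ne, one_ne_zero,
    Pi.single_eq_same]
  ring

theorem exists_glEquiv_apply_eight_eq_zero [IsAlgClosed K] (h8 : ((8).factorial : K) ≠ 0)
    (hk : covK (binomForm 8 a) = binomForm 4 (Pi.single 0 c)) (hJ5 : shJ5 (binomForm 8 a) = 0) :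
    ∃ b, GLEquiv (binomForm 8 a) (binomForm 8 b) ∧ b 8 = 0 ∧
      ∃ d, covK (binomForm 8 b) = binomForm 4 (Pi.single 0 d) := by
  by_cases hc : c = 0
  · obtain ⟨b, hab, hb⟩ :=
      exists_glEquiv_binomForm_apply_eq_zero (by norm_num) h8 (isHomogeneous_binomForm 8 a)
    refine ⟨b, hab, hb, 0, ?_⟩
    obtain ⟨M, -, hM⟩ := hab.symm
    have hzero : binomForm 4 (Pi.single 0 0 : ℕ → K) = 0 := by simp [binomForm]
    rw [hM, isCovariant_covK, hk, hc, hzero, map_zero, smul_zero]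
  · rw [shJ5_binomForm_of_covK_eq_single_zero h8 hk] at hJ5
    exact ⟨a, ⟨1, by simp, (linSubst_one _).symm⟩,
      (mul_eq_zero.mp hJ5).resolve_left (pow_ne_zero 2 hc), c, hk⟩

theorem exists_glEquiv_apply_six_eq_zero (h8 : ((8).factorial : K) ≠ 0)
    (hk : covK (binomForm 8 a) = binomForm 4 (Pi.single 0 c)) (ha₈ : a 8 = 0) (ha₇ : a 7 ≠ 0) :
    ∃ b, GLEquiv (binomForm 8 a) (binomForm 8 b) ∧ b 8 = 0 ∧ b 7 ≠ 0 ∧ b 6 = 0 ∧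
      covK (binomForm 8 b) = binomForm 4 (Pi.single 0 c) := by
  have two : (2 : K) ≠ 0 := ofNat_ne_zero_of_dvd h8 (by decide)
  obtain ⟨s, hs⟩ : ∃ s, a 6 + 2 * s * a 7 = 0 := ⟨-a 6 / (2 * a 7), by field_simp; ring⟩
  have hdet : (!![1, 0; s, 1] : Matrix (Fin 2) (Fin 2) K).det = 1 := by simp
  have hshear := linSubst_shear_binomForm 8 s a
  refine ⟨_, hshear ▸ glEquiv_linSubst (hdet ▸ isUnit_one) (binomForm 8 a), by simpa using ha₈,
    by simpa [ha₈] using ha₇, ?_, ?_⟩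
  · simp only [Nat.reduceSub, Function.iterate_succ, Function.iterate_zero, Function.comp_apply,
      id_eq]
    linear_combination hs + s ^ 2 * ha₈
  · rw [← hshear, isCovariant_covK, hdet, hk, one_pow, one_smul]
    simp [binomForm]

theorem exists_sq_eq_cube_eq {x y : K} (h : x ^ 3 = y ^ 2) : ∃ t, x = t ^ 2 ∧ y = t ^ 3 := by
  by_cases hx : x = 0
  · exact ⟨0, by simpa using hx, by simpa [hx] using h.symm⟩
  · refine ⟨y / x, ?_, ?_⟩
    · rw [div_pow, ← h]
      field_simp
    · rw [div_pow, h]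
      field_simp

theorem cusp_equation_of_covK_eq_single_zero (h8 : ((8).factorial : K) ≠ 0)
    (hk : covK (binomForm 8 a) = binomForm 4 (Pi.single 0 c)) (hJ2 : shJ2 (binomForm 8 a) = 0)
    (ha₈ : a 8 = 0) (ha₆ : a 6 = 0) : 64 * a 5 ^ 3 + 27 * a 4 ^ 2 * a 7 = 0 := by
  have hcoeff := covKCoeffs_eq_of_covK_eq h8 hk
  have three : (3 : K) ≠ 0 := ofNat_ne_zero_of_dvd h8 (by decide)
  have thirty : (30 : K) ≠ 0 := ofNat_ne_zero_of_dvd h8 (by decide)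
  have hk₂ : -(2 * a 1 * a 7) + 34 * a 3 * a 5 - 25 * a 4 ^ 2 = 0 := by
    simpa [covKCoeffs, ha₆, ha₈, three] using hcoeff 2 (by norm_num)
  have hk₄ : -(12 * a 3 * a 7) - 20 * a 5 ^ 2 = 0 := by
    simpa [covKCoeffs, ha₆, ha₈] using hcoeff 4 (by norm_num)
  rw [shJ2_binomForm h8, ha₆, ha₈] at hJ2
  refine (mul_eq_zero.mp ?_).resolve_left thirty
  linear_combination 3 * a 7 * (hJ2 - 8 * hk₂) - 96 * a 5 * hk₄

theorem exists_coeff_eq_of_covK_eq_single_zero (h8 : ((8).factorial : K) ≠ 0)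
    (hk : covK (binomForm 8 a) = binomForm 4 (Pi.single 0 c)) (hJ2 : shJ2 (binomForm 8 a) = 0)
    (ha₈ : a 8 = 0) (ha₇ : a 7 ≠ 0) (ha₆ : a 6 = 0) :
    ∃ s, a 0 = 48 * s ^ 7 * a 7 ∧ a 1 = -35 * s ^ 6 * a 7 ∧ a 2 = 24 * s ^ 5 * a 7 ∧
      a 3 = -15 * s ^ 4 * a 7 ∧ a 4 = 8 * s ^ 3 * a 7 ∧ a 5 = -3 * s ^ 2 * a 7 := by
  have hcoeff := covKCoeffs_eq_of_covK_eq h8 hk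
  have two : (2 : K) ≠ 0 := ofNat_ne_zero_of_dvd h8 (by decide)
  have three : (3 : K) ≠ 0 := ofNat_ne_zero_of_dvd h8 (by decide)
  have five : (5 : K) ≠ 0 := ofNat_ne_zero_of_dvd h8 (by decide)
  have eight : (8 : K) ≠ 0 := ofNat_ne_zero_of_dvd h8 (by decide)
  have twelve : (12 : K) ≠ 0 := ofNat_ne_zero_of_dvd h8 (by decide)
  have hk₁ : a 0 * a 7 + 9 * a 2 * a 5 - 5 * a 3 * a 4 = 0 := by
    simpa [covKCoeffs, ha₆] using hcoeff 1 (by norm_num)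
  have hk₂ : -(2 * a 1 * a 7) + 34 * a 3 * a 5 - 25 * a 4 ^ 2 = 0 := by
    simpa [covKCoeffs, ha₆, ha₈, three] using hcoeff 2 (by norm_num)
  have hk₃ : -(5 * a 2 * a 7) - 5 * a 4 * a 5 = 0 := by
    simpa [covKCoeffs, ha₆, ha₈] using hcoeff 3 (by norm_num)
  have hk₄ : -(12 * a 3 * a 7) - 20 * a 5 ^ 2 = 0 := by
    simpa [covKCoeffs, ha₆, ha₈] using hcoeff 4 (by norm_num)
  obtain ⟨s, hs₅, hs₄⟩ : ∃ s, -a 5 / (3 * a 7) = s ^ 2 ∧ a 4 / (8 * a 7) = s ^ 3 := by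
    refine exists_sq_eq_cube_eq ?_
    field_simp
    linear_combination -cusp_equation_of_covK_eq_single_zero h8 hk hJ2 ha₈ ha₆
  have ha₅ : a 5 = -3 * s ^ 2 * a 7 := by
    rw [← hs₅]
    field_simp
  have ha₄ : a 4 = 8 * s ^ 3 * a 7 := by
    rw [← hs₄]
    field_simp
  have ha₃ : a 3 = -15 * s ^ 4 * a 7 := mul_left_cancel₀ (mul_ne_zero twelve ha₇) <| by
    rw [ha₅] at hk₄
    linear_combination -hk₄
  have ha₂ : a 2 = 24 * s ^ 5 * a 7 := mul_left_cancel₀ (mul_ne_zero five ha₇) <| by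
    rw [ha₅, ha₄] at hk₃
    linear_combination -hk₃
  have ha₁ : a 1 = -35 * s ^ 6 * a 7 := mul_left_cancel₀ (mul_ne_zero two ha₇) <| by
    rw [ha₅, ha₄, ha₃] at hk₂
    linear_combination -hk₂
  have ha₀ : a 0 = 48 * s ^ 7 * a 7 := mul_left_cancel₀ ha₇ <| by
    rw [ha₅, ha₄, ha₃, ha₂] at hk₁
    linear_combination hk₁
  exact ⟨s, ha₀, ha₁, ha₂, ha₃, ha₄, ha₅⟩

theorem exists_binomForm_eq_of_covK_eq_single_zero (h8 : ((8).factorial : K) ≠ 0)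
    (hk : covK (binomForm 8 a) = binomForm 4 (Pi.single 0 c)) (hJ2 : shJ2 (binomForm 8 a) = 0)
    (ha₈ : a 8 = 0) (ha₇ : a 7 ≠ 0) (ha₆ : a 6 = 0) :
    ∃ s, binomForm 8 a =
      C (8 * a 7) * X 0 * (C s * X 0 - X 1) ^ 6 * (C (6 * s) * X 0 + X 1) := by
  obtain ⟨s, ha₀, ha₁, ha₂, ha₃, ha₄, ha₅⟩ :=
    exists_coeff_eq_of_covK_eq_single_zero h8 hk hJ2 ha₈ ha₇ ha₆
  refine ⟨s, ?_⟩
  simp only [binomForm, ha₀, C_mul, C_ofNat, C_pow, ha₁, C_neg, ha₂, ha₃, ha₄, ha₅, ha₆, C_0, ha₈]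
  ring

theorem ShiodaRelations.not_squarefree_of_covK_eq_single_zero [IsAlgClosed K]
    (h : ShiodaRelations (binomForm 8 a)) (h8 : ((8).factorial : K) ≠ 0)
    (hk : covK (binomForm 8 a) = binomForm 4 (Pi.single 0 c)) :
    ¬Squarefree (binomForm 8 a) := by
  intro hsf
  obtain ⟨b, hab, hb₈, d, hkb⟩ := exists_glEquiv_apply_eight_eq_zero h8 hk h.shJ5_eq_zero
  have hb₇ : b 7 ≠ 0 := apply_ne_zero_of_squarefree_binomForm (hab.squarefree hsf) hb₈
  obtain ⟨e, hbe, he₈, he₇, he₆, hke⟩ := exists_glEquiv_apply_six_eq_zero h8 hkb hb₈ hb₇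
  have hae := hab.trans hbe
  obtain ⟨s, hs⟩ := exists_binomForm_eq_of_covK_eq_single_zero h8 hke
    (h.of_glEquiv hae).shJ2_eq_zero he₈ he₇ he₆
  have hdvd : (C s * X 0 - X 1) ^ 2 ∣ binomForm 8 e := by
    rw [hs]
    exact ((pow_dvd_pow _ (by norm_num)).mul_left _).mul_right _
  exact not_squarefree_of_sq_dvd (by simp) hdvd (hae.squarefree hsf)

end QuadrupleRoot

section Stratum

variable {K : Type*} [Field K] [IsAlgClosed K] {f : MvPolynomial (Fin 2) K}

theorem ShiodaRelations.shJ7_ne_zero (h : ShiodaRelations f) (h8 : ((8).factorial : K) ≠ 0)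
    (hf : f.IsHomogeneous 8) (hsf : Squarefree f) : shJ7 f ≠ 0 := by
  obtain ⟨a, c, hfa, hk | ⟨hc, hk⟩⟩ :=
    exists_glEquiv_covK_eq_single h8 hf h.shJ4_eq_zero h.shJ6_eq_zero
  · exact ((h.of_glEquiv hfa).not_squarefree_of_covK_eq_single_zero h8 hk
      (hfa.squarefree hsf)).elim
  · rw [Ne, isInvariant_shJ7.eq_zero_iff_of_glEquiv hfa,
      shJ7_binomForm_of_covK_eq_single_one h8 hk]
    have ha₈ : a 8 = 0 := (h.of_glEquiv hfa).apply_eight_eq_zero h8 hk hc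
    have ha₇ : a 7 ≠ 0 := apply_ne_zero_of_squarefree_binomForm (hfa.squarefree hsf) ha₈
    exact mul_ne_zero (mul_ne_zero (ofNat_ne_zero_of_dvd h8 (by decide)) (pow_ne_zero 3 hc)) ha₇

theorem ShiodaRelations.glEquiv_X_pow_mul_X_sub_X_pow (h : ShiodaRelations f)
    (h8 : ((8).factorial : K) ≠ 0) (hf : f.IsHomogeneous 8) (hJ7 : shJ7 f ≠ 0) :
    GLEquiv f (X 0 ^ 7 * X 1 - X 1 ^ 8) := by
  obtain ⟨a, c, hfa, hk | ⟨hc, hk⟩⟩ :=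
    exists_glEquiv_covK_eq_single h8 hf h.shJ4_eq_zero h.shJ6_eq_zero
  · exact (hJ7 ((isInvariant_shJ7.eq_zero_iff_of_glEquiv hfa).mpr
      (shJ7_binomForm_of_covK_eq_single_zero h8 hk))).elim
  · have ha₇ : a 7 ≠ 0 := by
      intro ha₇
      rw [Ne, isInvariant_shJ7.eq_zero_iff_of_glEquiv hfa,
        shJ7_binomForm_of_covK_eq_single_one h8 hk, ha₇, mul_zero] at hJ7
      exact hJ7 rfl
    exact hfa.trans ((h.of_glEquiv hfa).glEquiv_of_covK_eq_single_one h8 hk hc ha₇)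

end Stratum

end BinaryForm

open BinaryForm in
theorem statement18_general {K : Type*} [Field K] [IsAlgClosed K]
    (hchar : ringChar K = 0 ∨ 11 ≤ ringChar K)
    (f : MvPolynomial (Fin 2) K) (hf : f.IsHomogeneous 8) (hsf : Squarefree f) :
    (ShiodaRelations f ↔ GLEquiv f (X 0 ^ 7 * X 1 - X 1 ^ 8)) ∧
      (ShiodaRelations f → shJ3 f = 0 ∧ shJ7 f ≠ 0) := by
  have h8 : ((8).factorial : K) ≠ 0 :=
    natCast_factorial_ne_zero_of_lt_ringChar (hchar.imp_right (by lia))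
  have h7 : NeZero ((7 : ℕ) : K) := ⟨ofNat_ne_zero_of_dvd h8 (by decide)⟩
  have hJ7 (h : ShiodaRelations f) : shJ7 f ≠ 0 := h.shJ7_ne_zero h8 hf hsf
  have hnormal (h : ShiodaRelations f) : GLEquiv f (X 0 ^ 7 * X 1 - X 1 ^ 8) :=
    h.glEquiv_X_pow_mul_X_sub_X_pow h8 hf (hJ7 h)
  have hJ3 (h : ShiodaRelations f) : shJ3 f = 0 :=
    (isInvariant_shJ3.eq_zero_iff_of_glEquiv (hnormal h)).mpr shJ3_X_pow_mul_X_sub_X_pow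
  exact ⟨⟨hnormal, fun h => shiodaRelations_X_pow_mul_X_sub_X_pow.of_glEquiv h.symm⟩,
    fun h => ⟨hJ3 h, hJ7 h⟩⟩

/-- Identification of the stratum `C₁₄`: a squarefree binary octic `f` over an algebraically
closed field of characteristic `0` or `≥ 11` satisfies
`J₂ = J₃ = J₄ = J₅ = J₆ = J₈ = J₉ = J₁₀ = 0` iff `f` is `GL₂(K)`-equivalent to `X⁷Z − Z⁸`
(the homogenization of `x⁷ − 1`), and in that case `J₇ ≠ 0`; equivalently the genus-3 curve
`y² = f(x,1)` has automorphism group `C₁₄` iff these relations hold, and such a curve is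
`K`-isomorphic to `y² = x⁷ − 1`. -/
theorem statement18 {K : Type*} [Field K] [IsAlgClosed K]
    (hchar : ringChar K = 0 ∨ 11 ≤ ringChar K)
    (f : MvPolynomial (Fin 2) K) (hf : f.IsHomogeneous 8) (hsf : Squarefree f) :
    ((shJ2 f = 0 ∧ shJ3 f = 0 ∧ shJ4 f = 0 ∧ shJ5 f = 0 ∧ shJ6 f = 0 ∧
        shJ8 f = 0 ∧ shJ9 f = 0 ∧ shJ10 f = 0) ↔
      ∃ M : Matrix (Fin 2) (Fin 2) K, IsUnit M.det ∧
        f = bind₁ (fun j : Fin 2 => C (M j 0) * X 0 + C (M j 1) * X 1)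
          (X 0 ^ 7 * X 1 - X 1 ^ 8)) ∧
    ((shJ2 f = 0 ∧ shJ3 f = 0 ∧ shJ4 f = 0 ∧ shJ5 f = 0 ∧ shJ6 f = 0 ∧
        shJ8 f = 0 ∧ shJ9 f = 0 ∧ shJ10 f = 0) → shJ7 f ≠ 0) := by
  obtain ⟨hiff, hJ⟩ := statement18_general hchar f hf hsf
  refine ⟨⟨?_, fun h => ?_⟩, ?_⟩
  · rintro ⟨h2, -, h4, h5, h6, h8, h9, h10⟩
    exact hiff.mp ⟨h2, h4, h5, h6, h8, h9, h10⟩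
  · have hrel := hiff.mpr h
    exact ⟨hrel.shJ2_eq_zero, (hJ hrel).1, hrel.shJ4_eq_zero, hrel.shJ5_eq_zero,
      hrel.shJ6_eq_zero, hrel.shJ8_eq_zero, hrel.shJ9_eq_zero, hrel.shJ10_eq_zero⟩
  · rintro ⟨h2, -, h4, h5, h6, h8, h9, h10⟩
    exact (hJ ⟨h2, h4, h5, h6, h8, h9, h10⟩).2
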